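/- Density estimate for (Λ,r)-minimal partitions for the fractional perimeter: if {E_i}_{i∈ℕ} is a partition of ℝⁿ that is Λ-minimal in every ball of radius r < 1/2, then there exists C₀ = C₀(n,s,Λ) such that Σ_i Per(E_i, B_r(x)) ≤ C₀ r^{n−s} for all x ∈ ℝⁿ. -/

import Mathlib

/-!
The minimal partition `E` is compared in `B_r(x)` with the one obtained by adding a smaller ball
`B_ρ(x)`, `ρ < r`, to `E 0` and removing it from the other cells (`absorb`). For a fixed cell, the
contribution of a set `S` to the perimeter localized in `B_r` is a measure in `S` (`perMeasure`);
let `ν` be the sum over the cells. The comparison partition has perimeter at most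
`ν (B_r \ B_ρ) + 3 Per(B_ρ)` (`tsum_fracPerLoc_absorb_le`), since the new interactions all cross
`∂B_ρ` and the cells are disjoint up to null sets. Minimality and `ν B_r < ∞` then give
`ν B_ρ ≤ 3 Per(B_ρ) + 2 Λ |B_ρ|` (`perMeasure_ball_le`), and `ρ ↑ r` yields the estimate because
`Per(B_ρ) ≤ C ρ^{n-s}` and `r^n ≤ r^{n-s}` for `r < 1`.

The bound on `Per(B_ρ)` (`fracInter_ball_compl_le`) is a computation in polar coordinates: a point
at distance `t` from the complement of `B_ρ` interacts with it by at most a constant times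
`t^{-s}`, and `(ρ - ‖x‖)^{-s}` is integrable on `B_ρ` as `s < 1`. Dimension `0` is treated apart.
-/

open MeasureTheory
open scoped ENNReal

/-- The fractional kernel `|h|^{-(n+s)}`. -/
noncomputable def fracKernel (n : ℕ) (s : ℝ) (h : EuclideanSpace ℝ (Fin n)) : ℝ≥0∞ :=
  ENNReal.ofReal (1 / ‖h‖ ^ ((n : ℝ) + s))

/-- The localized fractional `s`-perimeter. -/
noncomputable def fracPerLoc (n : ℕ) (s : ℝ)
    (E U : Set (EuclideanSpace ℝ (Fin n))) : ℝ≥0∞ :=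
  (∫⁻ x in E ∩ U, ∫⁻ y in Eᶜ, fracKernel n s (x - y) ∂volume ∂volume) +
  (∫⁻ x in E \ U, ∫⁻ y in U \ E, fracKernel n s (x - y) ∂volume ∂volume)

/-- `E` is a partition of `ℝⁿ` (up to null sets). -/
def IsPartition {n : ℕ} (E : ℕ → Set (EuclideanSpace ℝ (Fin n))) : Prop :=
  (∀ i, MeasurableSet (E i)) ∧ (∀ i j, i ≠ j → volume (E i ∩ E j) = 0) ∧
    volume ((⋃ i, E i)ᶜ) = 0

/-- `E` is a `Λ`-minimal partition in the open set `A` for the fractional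
`s`-perimeter. -/
def IsLambdaMinimal {n : ℕ} (s : ℝ) (Λ : ℝ≥0∞)
    (E : ℕ → Set (EuclideanSpace ℝ (Fin n)))
    (A : Set (EuclideanSpace ℝ (Fin n))) : Prop :=
  (∑' i, fracPerLoc n s (E i) A) ≠ ⊤ ∧
  ∀ F : ℕ → Set (EuclideanSpace ℝ (Fin n)), IsPartition F →
    (∀ i, IsCompact (closure (symmDiff (E i) (F i))) ∧
      closure (symmDiff (E i) (F i)) ⊆ A) →
    (∑' i, fracPerLoc n s (E i) A)
      ≤ ∑' i, (fracPerLoc n s (F i) A + Λ * volume (symmDiff (E i) (F i)))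

open Set

/-! ### Radial integrals -/

/-- Integration of a radial function in polar coordinates, for functions with values in
`[0, ∞]`. -/
theorem lintegral_fun_norm_polar {V : Type*} [NormedAddCommGroup V] [NormedSpace ℝ V]
    [MeasurableSpace V] [BorelSpace V] [FiniteDimensional ℝ V] [Nontrivial V]
    (μ : Measure V) [μ.IsAddHaarMeasure] {f : ℝ → ℝ≥0∞} (hf : Measurable f) :
    ∫⁻ x, f ‖x‖ ∂μ = μ.toSphere univ *
      ∫⁻ y in Ioi (0 : ℝ), ENNReal.ofReal (y ^ (Module.finrank ℝ V - 1)) * f y := by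
  have h1 : ∫⁻ x, f ‖x‖ ∂μ = ∫⁻ x : ({(0 : V)}ᶜ : Set V), f ‖x.1‖ ∂(μ.comap (↑)) := by
    rw [lintegral_subtype_comap (measurableSet_singleton _).compl (fun x : V => f ‖x‖),
      restrict_compl_singleton]
  have h2 : ∫⁻ x : ({(0 : V)}ᶜ : Set V), f ‖x.1‖ ∂(μ.comap (↑))
      = ∫⁻ p, f p.2 ∂(μ.toSphere.prod (Measure.volumeIoiPow (Module.finrank ℝ V - 1))) := by
    simpa using μ.measurePreserving_homeomorphUnitSphereProd.lintegral_comp_emb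
      (Homeomorph.measurableEmbedding _) (fun p => f p.2)
  rw [h1, h2, lintegral_prod _ (by fun_prop)]
  simp only [lintegral_const]
  rw [mul_comm]
  congr 1
  rw [Measure.volumeIoiPow, lintegral_withDensity_eq_lintegral_mul _ (by fun_prop) (by fun_prop)]
  exact lintegral_subtype_comap measurableSet_Ioi
    (fun y : ℝ => ENNReal.ofReal (y ^ (Module.finrank ℝ V - 1)) * f y)

theorem measurable_fracKernel (n : ℕ) (s : ℝ) : Measurable (fracKernel n s) := by
  unfold fracKernel; fun_prop

theorem lintegral_Ioi_rpow {a t : ℝ} (ha : a < -1) (ht : 0 < t) :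
    ∫⁻ y in Ioi t, ENNReal.ofReal (y ^ a) = ENNReal.ofReal (-t ^ (a + 1) / (a + 1)) := by
  rw [← integral_Ioi_rpow_of_lt ha ht,
    ofReal_integral_eq_lintegral_ofReal (integrableOn_Ioi_rpow_of_lt ha ht)]
  filter_upwards [ae_restrict_mem measurableSet_Ioi] with y hy
  exact Real.rpow_nonneg (ht.trans hy).le _

theorem lintegral_Ioo_sub_rpow {s ρ : ℝ} (hs : s < 1) (hρ : 0 < ρ) :
    ∫⁻ y in Ioo 0 ρ, ENNReal.ofReal ((ρ - y) ^ (-s)) = ENNReal.ofReal (ρ ^ (1 - s) / (1 - s)) := by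
  have hi : IntervalIntegrable (fun y => (ρ - y) ^ (-s)) volume 0 ρ := by
    have := (intervalIntegral.intervalIntegrable_rpow' (a := 0) (b := ρ) (r := -s)
      (by linarith)).comp_sub_left ρ
    simpa using this.symm
  have hv : ∫ y in (0 : ℝ)..ρ, (ρ - y) ^ (-s) = ρ ^ (1 - s) / (1 - s) := by
    rw [intervalIntegral.integral_comp_sub_left (fun y => y ^ (-s)),
      integral_rpow (Or.inl (by linarith))]
    have h1 : -s + 1 = 1 - s := by ring
    simp [h1, Real.zero_rpow (by linarith : (1 - s) ≠ 0)]
  rw [← hv, intervalIntegral.integral_of_le hρ.le,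
    ofReal_integral_eq_lintegral_ofReal hi.1, Measure.restrict_congr_set Ioo_ae_eq_Ioc]
  filter_upwards [ae_restrict_mem measurableSet_Ioc] with y hy
  exact Real.rpow_nonneg (by linarith [hy.2]) _

/-- Surface measure of the unit sphere of `ℝⁿ`. -/
noncomputable def sphereMass (n : ℕ) : ℝ≥0∞ :=
  (volume : Measure (EuclideanSpace ℝ (Fin n))).toSphere univ

theorem sphereMass_ne_top (n : ℕ) : sphereMass n ≠ ⊤ := measure_ne_top _ _

theorem lintegral_fracKernel_exterior {n : ℕ} (hn : n ≠ 0) {s t : ℝ} (hs : 0 < s) (ht : 0 < t) :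
    ∫⁻ h in {h : EuclideanSpace ℝ (Fin n) | t ≤ ‖h‖}, fracKernel n s h
      = sphereMass n * ENNReal.ofReal (t ^ (-s) / s) := by
  have : Nonempty (Fin n) := ⟨⟨0, Nat.pos_of_ne_zero hn⟩⟩
  have hm : MeasurableSet {h : EuclideanSpace ℝ (Fin n) | t ≤ ‖h‖} :=
    measurableSet_le measurable_const measurable_norm
  rw [← lintegral_indicator hm]
  have := lintegral_fun_norm_polar (volume : Measure (EuclideanSpace ℝ (Fin n)))
    (f := (Ici t).indicator fun y => ENNReal.ofReal (1 / y ^ ((n : ℝ) + s)))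
    (Measurable.indicator (by fun_prop) measurableSet_Ici)
  refine Eq.trans ?_ (this.trans ?_)
  · rfl
  rw [sphereMass]
  congr 1
  have e1 : t ^ (-s) / s = -t ^ ((-1 - s) + 1) / ((-1 - s) + 1) := by
    rw [show (-1 - s) + 1 = -s by ring, neg_div_neg_eq]
  rw [e1, ← lintegral_Ioi_rpow (by linarith) ht, Measure.restrict_congr_set (Ioi_ae_eq_Ici (a := t)),
    ← lintegral_indicator measurableSet_Ioi, ← lintegral_indicator measurableSet_Ici]
  congr 1
  ext y
  by_cases hy : t ≤ y
  · have hy0 : 0 < y := ht.trans_le hy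
    rw [indicator_of_mem (by exact hy0), indicator_of_mem (by exact hy),
      indicator_of_mem (by exact hy), ← ENNReal.ofReal_mul (by positivity)]
    congr 1
    rw [finrank_euclideanSpace_fin, ← Real.rpow_natCast, Nat.cast_sub (by omega), one_div,
      ← Real.rpow_neg hy0.le, ← Real.rpow_add hy0]
    congr 1
    push_cast
    ring
  · simp [indicator, hy]

theorem lintegral_ball_sub_norm_rpow {n : ℕ} (hn : n ≠ 0) {s ρ : ℝ} (hs : s < 1) (hρ : 0 < ρ) :
    ∫⁻ x in Metric.ball (0 : EuclideanSpace ℝ (Fin n)) ρ, ENNReal.ofReal ((ρ - ‖x‖) ^ (-s))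
      ≤ sphereMass n * ENNReal.ofReal (ρ ^ ((n : ℝ) - s) / (1 - s)) := by
  have : Nonempty (Fin n) := ⟨⟨0, Nat.pos_of_ne_zero hn⟩⟩
  rw [← lintegral_indicator measurableSet_ball]
  have := lintegral_fun_norm_polar (volume : Measure (EuclideanSpace ℝ (Fin n)))
    (f := (Iio ρ).indicator fun y => ENNReal.ofReal ((ρ - y) ^ (-s)))
    (Measurable.indicator (by fun_prop) measurableSet_Iio)
  refine Eq.trans_le ?_ (this.trans_le ?_)
  · congr 1
    ext x
    simp [indicator]
  rw [sphereMass]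
  gcongr
  have e1 : ρ ^ ((n : ℝ) - s) / (1 - s) = ρ ^ (n - 1) * (ρ ^ (1 - s) / (1 - s)) := by
    rw [← mul_div_assoc, ← Real.rpow_natCast, ← Real.rpow_add hρ, Nat.cast_sub (by omega)]
    congr 2
    push_cast
    ring
  rw [e1, ENNReal.ofReal_mul (by positivity), ← lintegral_Ioo_sub_rpow hs hρ,
    ← lintegral_const_mul _ (by fun_prop),
    ← lintegral_indicator measurableSet_Ioi, ← lintegral_indicator measurableSet_Ioo]
  refine lintegral_mono fun y => ?_
  by_cases hy : y ∈ Ioo 0 ρ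
  · rw [indicator_of_mem (by exact hy.1), indicator_of_mem (by exact hy.2), indicator_of_mem hy,
      finrank_euclideanSpace_fin]
    have := hy.1
    have := hy.2
    gcongr
  · rw [mem_Ioo, not_and] at hy
    by_cases h0 : 0 < y
    · simp [indicator, hy h0]
    · simp [indicator, h0]

/-! ### Interactions between sets and the perimeter of a ball -/

/-- The interaction `∫_A ∫_B |x - y|^{-(n+s)} dy dx` between two sets. -/
noncomputable def fracInter (n : ℕ) (s : ℝ) (A B : Set (EuclideanSpace ℝ (Fin n))) : ℝ≥0∞ :=
  ∫⁻ x in A, ∫⁻ y in B, fracKernel n s (x - y)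

section interaction

variable {n : ℕ} {s : ℝ}

theorem fracKernel_sub_comm (x y : EuclideanSpace ℝ (Fin n)) :
    fracKernel n s (x - y) = fracKernel n s (y - x) := by
  unfold fracKernel; rw [norm_sub_rev]

theorem measurable_fracKernel_sub :
    Measurable fun p : EuclideanSpace ℝ (Fin n) × EuclideanSpace ℝ (Fin n) =>
      fracKernel n s (p.1 - p.2) :=
  (measurable_fracKernel n s).comp (by fun_prop)

theorem measurable_inner (B : Set (EuclideanSpace ℝ (Fin n))) :
    Measurable fun x => ∫⁻ y in B, fracKernel n s (x - y) :=
  Measurable.lintegral_prod_right' measurable_fracKernel_sub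

theorem fracInter_mono {A A' B B' : Set (EuclideanSpace ℝ (Fin n))} (hA : A ⊆ A') (hB : B ⊆ B') :
    fracInter n s A B ≤ fracInter n s A' B' :=
  (lintegral_mono_set hA).trans (lintegral_mono fun _ => lintegral_mono_set hB)

theorem fracInter_comm (A B : Set (EuclideanSpace ℝ (Fin n))) :
    fracInter n s A B = fracInter n s B A := by
  unfold fracInter
  rw [lintegral_lintegral_swap measurable_fracKernel_sub.aemeasurable]
  simp only [fracKernel_sub_comm]

theorem fracInter_union_left (A A' B : Set (EuclideanSpace ℝ (Fin n))) :
    fracInter n s (A ∪ A') B ≤ fracInter n s A B + fracInter n s A' B :=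
  lintegral_union_le _ _ _

theorem fracInter_union_right (A B B' : Set (EuclideanSpace ℝ (Fin n))) :
    fracInter n s A (B ∪ B') ≤ fracInter n s A B + fracInter n s A B' := by
  rw [fracInter_comm A, fracInter_comm A, fracInter_comm A]
  exact fracInter_union_left _ _ _

/-- The cells are disjoint up to null sets, so their interactions with `B` do not overlap. -/
theorem tsum_fracInter_le {E : ℕ → Set (EuclideanSpace ℝ (Fin n))} (hE : IsPartition E)
    {A : Set (EuclideanSpace ℝ (Fin n))} (hA : MeasurableSet A)
    (B : Set (EuclideanSpace ℝ (Fin n))) :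
    ∑' i, fracInter n s (E i ∩ A) B ≤ fracInter n s A B := by
  unfold fracInter
  rw [← lintegral_iUnion₀ (fun i => ((hE.1 i).inter hA).nullMeasurableSet)]
  · exact lintegral_mono_set (iUnion_subset fun i => inter_subset_right)
  · intro i j hij
    exact measure_mono_null (inter_subset_inter inter_subset_left inter_subset_left)
      (hE.2.1 i j hij)

/-- The fractional perimeter of a ball of radius `ρ` is at most a constant times `ρ^{n-s}`: for
`x` in the ball, the complement lies outside the ball of radius `ρ - ‖x - c‖` around `x`. -/
theorem fracInter_ball_compl_le (hn : n ≠ 0) (hs : s ∈ Ioo (0 : ℝ) 1)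
    (c : EuclideanSpace ℝ (Fin n)) {ρ : ℝ} (hρ : 0 < ρ) :
    fracInter n s (Metric.ball c ρ) (Metric.ball c ρ)ᶜ
      ≤ sphereMass n * sphereMass n * ENNReal.ofReal (1 / s / (1 - s))
        * ENNReal.ofReal (ρ ^ ((n : ℝ) - s)) := by
  have h1 : ∀ x ∈ Metric.ball c ρ, ∫⁻ y in (Metric.ball c ρ)ᶜ, fracKernel n s (x - y)
      ≤ (sphereMass n * ENNReal.ofReal (1 / s)) * ENNReal.ofReal ((ρ - ‖x - c‖) ^ (-s)) := by
    intro x hx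
    have hx' : ‖x - c‖ < ρ := by simpa [dist_eq_norm] using hx
    have ht : 0 < ρ - ‖x - c‖ := by linarith
    have hm : MeasurableSet {h : EuclideanSpace ℝ (Fin n) | ρ - ‖x - c‖ ≤ ‖h‖} :=
      measurableSet_le measurable_const measurable_norm
    have h2 := lintegral_fracKernel_exterior (s := s) hn hs.1 ht
    rw [← lintegral_indicator hm,
      ← lintegral_sub_left_eq_self _ x] at h2
    rw [mul_assoc, ← ENNReal.ofReal_mul (by have := hs.1; positivity), one_div_mul_eq_div, ← h2,
      ← lintegral_indicator measurableSet_ball.compl]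
    refine lintegral_mono fun y => ?_
    by_cases hy : y ∈ (Metric.ball c ρ)ᶜ
    · rw [indicator_of_mem hy, indicator_of_mem]
      have hy' : ρ ≤ ‖y - c‖ := by simpa [dist_eq_norm] using hy
      have : ‖y - c‖ ≤ ‖x - y‖ + ‖x - c‖ := by
        rw [norm_sub_rev x y]
        simpa using norm_add_le (y - x) (x - c)
      simp only [mem_ofPred_eq]
      linarith
    · simp [indicator_of_notMem hy]
  have h3 : ∫⁻ x in Metric.ball c ρ, ENNReal.ofReal ((ρ - ‖x - c‖) ^ (-s))
      = ∫⁻ x in Metric.ball (0 : EuclideanSpace ℝ (Fin n)) ρ,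
          ENNReal.ofReal ((ρ - ‖x‖) ^ (-s)) := by
    rw [← lintegral_indicator measurableSet_ball, ← lintegral_indicator measurableSet_ball,
      ← lintegral_sub_right_eq_self ((Metric.ball (0 : EuclideanSpace ℝ (Fin n)) ρ).indicator
        fun x => ENNReal.ofReal ((ρ - ‖x‖) ^ (-s))) c]
    congr 1
    ext x
    simp [indicator, dist_eq_norm]
  calc fracInter n s (Metric.ball c ρ) (Metric.ball c ρ)ᶜ
      ≤ ∫⁻ x in Metric.ball c ρ, (sphereMass n * ENNReal.ofReal (1 / s)) *
          ENNReal.ofReal ((ρ - ‖x - c‖) ^ (-s)) := setLIntegral_mono' measurableSet_ball h1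
    _ ≤ (sphereMass n * ENNReal.ofReal (1 / s)) *
          (sphereMass n * ENNReal.ofReal (ρ ^ ((n : ℝ) - s) / (1 - s))) := by
        rw [lintegral_const_mul _ (by fun_prop), h3]
        gcongr
        exact lintegral_ball_sub_norm_rpow hn hs.2 hρ
    _ = _ := by
        have h4 : 0 < 1 - s := by linarith [hs.2]
        rw [show 1 / s / (1 - s) = 1 / s * (1 / (1 - s)) by ring,
          ENNReal.ofReal_mul (by have := hs.1; positivity),
          div_eq_mul_one_div (ρ ^ ((n : ℝ) - s)), ENNReal.ofReal_mul (by positivity)]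
        ring

/-! ### The perimeter as a measure, and the comparison partition -/

/-- The contribution of `S` to the perimeter of `E` localized in `U`, as a set function of `S`:
it is a measure in `S`, with total mass `fracPerLoc n s E U` on `U`. -/
noncomputable def perMeasure (n : ℕ) (s : ℝ) (U E : Set (EuclideanSpace ℝ (Fin n))) :
    Measure (EuclideanSpace ℝ (Fin n)) :=
  (volume.restrict E).withDensity (fun x => ∫⁻ y in Eᶜ, fracKernel n s (x - y)) +
  (volume.restrict Eᶜ).withDensity (fun x => ∫⁻ y in E \ U, fracKernel n s (x - y))

theorem perMeasure_apply {U E S : Set (EuclideanSpace ℝ (Fin n))} (hS : MeasurableSet S) :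
    perMeasure n s U E S = fracInter n s (E ∩ S) Eᶜ + fracInter n s (E \ U) (S \ E) := by
  rw [perMeasure, Measure.add_apply, withDensity_apply _ hS, withDensity_apply _ hS,
    Measure.restrict_restrict hS, Measure.restrict_restrict hS, fracInter_comm (E \ U),
    inter_comm E S]
  rfl

theorem fracPerLoc_eq_perMeasure {U E : Set (EuclideanSpace ℝ (Fin n))} (hU : MeasurableSet U) :
    fracPerLoc n s E U = perMeasure n s U E U := by
  rw [perMeasure_apply hU]; rfl

/-- The partition obtained by adding `B` to the cell `E 0` and removing it from the others. -/
def absorb (E : ℕ → Set (EuclideanSpace ℝ (Fin n))) (B : Set (EuclideanSpace ℝ (Fin n))) (i : ℕ) :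
    Set (EuclideanSpace ℝ (Fin n)) :=
  if i = 0 then E i ∪ B else E i \ B

theorem absorb_isPartition {E : ℕ → Set (EuclideanSpace ℝ (Fin n))} (hE : IsPartition E)
    {B : Set (EuclideanSpace ℝ (Fin n))} (hB : MeasurableSet B) : IsPartition (absorb E B) := by
  refine ⟨fun i => ?_, fun i j hij => measure_mono_null ?_ (hE.2.1 i j hij),
    measure_mono_null ?_ hE.2.2⟩
  · unfold absorb
    split_ifs
    · exact (hE.1 i).union hB
    · exact (hE.1 i).diff hB
  · unfold absorb
    intro x hx
    split_ifs at hx with h1 h2 h2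
    · omega
    all_goals
      simp only [mem_inter_iff, mem_union, mem_sdiff] at hx ⊢
      tauto
  · intro x hx
    simp only [mem_compl_iff, mem_iUnion, not_exists] at hx ⊢
    intro i hi
    by_cases hxB : x ∈ B
    · exact hx 0 (by simp [absorb, hxB])
    · refine hx i ?_
      unfold absorb
      split_ifs
      · exact Or.inl hi
      · exact ⟨hi, hxB⟩

theorem symmDiff_absorb_subset (E : ℕ → Set (EuclideanSpace ℝ (Fin n)))
    (B : Set (EuclideanSpace ℝ (Fin n))) (i : ℕ) : symmDiff (E i) (absorb E B i) ⊆ B := by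
  unfold absorb
  intro x hx
  rw [mem_symmDiff] at hx
  split_ifs at hx
  all_goals
    simp only [mem_union, mem_sdiff] at hx
    tauto

theorem symmDiff_absorb_subset_inter (E : ℕ → Set (EuclideanSpace ℝ (Fin n)))
    (B : Set (EuclideanSpace ℝ (Fin n))) {i : ℕ} (hi : i ≠ 0) :
    symmDiff (E i) (absorb E B i) ⊆ E i ∩ B := by
  rw [absorb, if_neg hi]
  intro x hx
  rw [mem_symmDiff] at hx
  simp only [mem_sdiff, mem_inter_iff] at hx ⊢
  tauto

/-- Each point of `B` is counted at most twice: once in the cell it leaves, once in `E 0`. -/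
theorem tsum_volume_symmDiff_absorb_le {E : ℕ → Set (EuclideanSpace ℝ (Fin n))}
    (hE : IsPartition E) {B : Set (EuclideanSpace ℝ (Fin n))} (hB : MeasurableSet B) :
    ∑' i, volume (symmDiff (E i) (absorb E B i)) ≤ 2 * volume B := by
  calc ∑' i, volume (symmDiff (E i) (absorb E B i))
      ≤ ∑' i, ((if i = 0 then volume B else 0) + volume (E i ∩ B)) := by
        refine ENNReal.tsum_le_tsum fun i => ?_
        split_ifs with h
        · exact (measure_mono (symmDiff_absorb_subset E B i)).trans le_self_add
        · rw [zero_add]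
          exact measure_mono (symmDiff_absorb_subset_inter E B h)
    _ = volume B + volume (⋃ i, E i ∩ B) := by
        rw [ENNReal.tsum_add, tsum_ite_eq, measure_iUnion₀ (fun i j hij => ?_)
          (fun i => ((hE.1 i).inter hB).nullMeasurableSet)]
        exact measure_mono_null (inter_subset_inter inter_subset_left inter_subset_left)
          (hE.2.1 i j hij)
    _ ≤ volume B + volume B := by
        gcongr
        exact iUnion_subset fun i => inter_subset_right
    _ = _ := (two_mul _).symm

/-- Absorbing `B ⊆ U` into one cell costs only interactions across the boundary of `B`; the
remaining perimeter is carried by `U \ B`. -/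
theorem fracPerLoc_absorb_le (E : ℕ → Set (EuclideanSpace ℝ (Fin n)))
    {U B : Set (EuclideanSpace ℝ (Fin n))} (hU : MeasurableSet U) (hB : MeasurableSet B)
    (hBU : B ⊆ U) (i : ℕ) :
    fracPerLoc n s (absorb E B i) U ≤ perMeasure n s U (E i) (U \ B) +
      ((if i = 0 then fracInter n s B Bᶜ else 0) + 2 * fracInter n s (E i ∩ Bᶜ) B) := by
  rw [perMeasure_apply (hU.diff hB)]
  change fracInter n s (absorb E B i ∩ U) (absorb E B i)ᶜ
    + fracInter n s (absorb E B i \ U) (U \ absorb E B i) ≤ _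
  unfold absorb
  split_ifs with h
  · calc fracInter n s ((E i ∪ B) ∩ U) (E i ∪ B)ᶜ + fracInter n s ((E i ∪ B) \ U) (U \ (E i ∪ B))
        ≤ (fracInter n s (E i ∩ (U \ B)) (E i)ᶜ + fracInter n s B Bᶜ)
          + fracInter n s (E i \ U) ((U \ B) \ E i) := by
          gcongr ?_ + ?_
          · refine (fracInter_mono (A' := (E i ∩ (U \ B)) ∪ B) (B' := (E i ∪ B)ᶜ) ?_
              subset_rfl).trans ((fracInter_union_left _ _ _).trans ?_)
            · intro x hx
              simp only [mem_inter_iff, mem_union, mem_sdiff] at hx ⊢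
              tauto
            · gcongr ?_ + ?_
              · exact fracInter_mono subset_rfl (compl_subset_compl.2 subset_union_left)
              · exact fracInter_mono subset_rfl (compl_subset_compl.2 subset_union_right)
          · refine fracInter_mono ?_ ?_
            · intro x hx
              have := @hBU x
              simp only [mem_union, mem_sdiff] at hx ⊢
              tauto
            · intro x hx
              simp only [mem_union, mem_sdiff] at hx ⊢
              tauto
      _ = fracInter n s (E i ∩ (U \ B)) (E i)ᶜ + fracInter n s (E i \ U) ((U \ B) \ E i)
          + (fracInter n s B Bᶜ + 0) := by ring
      _ ≤ _ := by gcongr; exact zero_le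
  · calc fracInter n s ((E i \ B) ∩ U) (E i \ B)ᶜ + fracInter n s ((E i \ B) \ U) (U \ (E i \ B))
        ≤ (fracInter n s (E i ∩ (U \ B)) (E i)ᶜ + fracInter n s (E i ∩ Bᶜ) B)
          + (fracInter n s (E i \ U) ((U \ B) \ E i) + fracInter n s (E i ∩ Bᶜ) B) := by
          gcongr ?_ + ?_
          · refine (fracInter_mono (A' := E i ∩ (U \ B)) (B' := (E i)ᶜ ∪ B) ?_ ?_).trans
              ((fracInter_union_right _ _ _).trans ?_)
            · intro x hx
              simp only [mem_inter_iff, mem_sdiff] at hx ⊢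
              tauto
            · intro x hx
              simp only [mem_union, mem_sdiff, mem_compl_iff] at hx ⊢
              tauto
            · exact add_le_add le_rfl
                (fracInter_mono (fun x hx => ⟨hx.1, hx.2.2⟩) subset_rfl)
          · refine (fracInter_mono (A' := E i \ U) (B' := ((U \ B) \ E i) ∪ B) ?_ ?_).trans
              ((fracInter_union_right _ _ _).trans ?_)
            · intro x hx
              simp only [mem_sdiff] at hx ⊢
              tauto
            · intro x hx
              simp only [mem_union, mem_sdiff] at hx ⊢
              tauto
            · exact add_le_add le_rfl
                (fracInter_mono (fun x hx => ⟨hx.1, fun hxB => hx.2 (hBU hxB)⟩) subset_rfl)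
      _ = _ := by ring

theorem tsum_fracPerLoc_absorb_le {E : ℕ → Set (EuclideanSpace ℝ (Fin n))} (hE : IsPartition E)
    {U B : Set (EuclideanSpace ℝ (Fin n))} (hU : MeasurableSet U) (hB : MeasurableSet B)
    (hBU : B ⊆ U) :
    ∑' i, fracPerLoc n s (absorb E B i) U
      ≤ Measure.sum (fun i => perMeasure n s U (E i)) (U \ B) + 3 * fracInter n s B Bᶜ := by
  refine (ENNReal.tsum_le_tsum (fracPerLoc_absorb_le E hU hB hBU)).trans ?_
  rw [ENNReal.tsum_add, ENNReal.tsum_add, tsum_ite_eq, ENNReal.tsum_mul_left,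
    Measure.sum_apply _ (hU.diff hB)]
  have := tsum_fracInter_le (s := s) hE hB.compl B
  rw [fracInter_comm Bᶜ] at this
  calc _ ≤ _ + (fracInter n s B Bᶜ + 2 * fracInter n s B Bᶜ) := by gcongr
    _ = _ := by ring

/-- The estimate on balls `B_ρ` strictly inside `B_r`. Finiteness of the total perimeter is what
allows the contribution of `B_r \ B_ρ` to be cancelled. -/
theorem perMeasure_ball_le {Λ : ℝ≥0∞} {E : ℕ → Set (EuclideanSpace ℝ (Fin n))}
    (hE : IsPartition E) {x : EuclideanSpace ℝ (Fin n)} {ρ r : ℝ} (hr : ρ < r)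
    (hmin : IsLambdaMinimal s Λ E (Metric.ball x r)) :
    Measure.sum (fun i => perMeasure n s (Metric.ball x r) (E i)) (Metric.ball x ρ)
      ≤ 3 * fracInter n s (Metric.ball x ρ) (Metric.ball x ρ)ᶜ
        + Λ * (2 * volume (Metric.ball x ρ)) := by
  set U := Metric.ball x r with hUdef
  set B := Metric.ball x ρ with hBdef
  set ν := Measure.sum (fun i => perMeasure n s U (E i)) with hν
  have hU : MeasurableSet U := measurableSet_ball
  have hB : MeasurableSet B := measurableSet_ball
  have hBU : B ⊆ U := Metric.ball_subset_ball hr.le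
  have htot : ∑' i, fracPerLoc n s (E i) U = ν U := by
    rw [hν, Measure.sum_apply _ hU]
    simp only [fracPerLoc_eq_perMeasure hU]
  have hcl : ∀ i, closure (symmDiff (E i) (absorb E B i)) ⊆ Metric.closedBall x ρ := fun i =>
    (closure_mono (symmDiff_absorb_subset E B i)).trans Metric.closure_ball_subset_closedBall
  have hle := hmin.2 (absorb E B) (absorb_isPartition hE hB) fun i =>
    ⟨(isCompact_closedBall x ρ).of_isClosed_subset isClosed_closure (hcl i),
      (hcl i).trans (Metric.closedBall_subset_ball hr)⟩
  rw [htot, ENNReal.tsum_add, ENNReal.tsum_mul_left] at hle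
  have hfin : ν U ≠ ⊤ := htot ▸ hmin.1
  have hfin' : ν (U \ B) ≠ ⊤ := ne_top_of_le_ne_top hfin (measure_mono sdiff_subset)
  have hsplit : ν (U \ B) + ν B = ν U := by
    rw [← measure_sdiff_add_inter U hB, inter_eq_self_of_subset_right hBU]
  refine (ENNReal.add_le_add_iff_left hfin').1 ?_
  rw [hsplit, ← add_assoc]
  refine hle.trans ?_
  gcongr
  · exact tsum_fracPerLoc_absorb_le hE hU hB hBU
  · exact tsum_volume_symmDiff_absorb_le hE hB

/-- On a point the kernel is `1 / 0 ^ s = 0`, so every perimeter vanishes. -/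
theorem fracPerLoc_zero_dim (hs : 0 < s) (E U : Set (EuclideanSpace ℝ (Fin 0))) :
    fracPerLoc 0 s E U = 0 := by
  have : ∀ h, fracKernel 0 s h = 0 := by
    intro h
    simp [fracKernel, Subsingleton.elim h 0, Real.zero_rpow hs.ne']
  simp [fracPerLoc, this]

end interaction

/-! ### The density estimate -/

/-- Density estimate for `(Λ,r)`-minimal partitions of `ℝⁿ` for the fractional
`s`-perimeter: there is `C₀ = C₀(n,s,Λ)` such that
`Σᵢ Per(Eᵢ, B_r(x)) ≤ C₀ r^{n-s}` for every `x` and every `r < 1/2`. -/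
theorem density_estimate_fractional (n : ℕ) (s : ℝ) (hs : s ∈ Set.Ioo (0 : ℝ) 1)
    (Λ : ℝ≥0∞) (hΛ : Λ ≠ ⊤) :
    ∃ C₀ : ℝ≥0∞, 0 < C₀ ∧ C₀ ≠ ⊤ ∧
      ∀ E : ℕ → Set (EuclideanSpace ℝ (Fin n)), IsPartition E →
        ∀ r : ℝ, 0 < r → r < 1 / 2 →
          (∀ x : EuclideanSpace ℝ (Fin n), IsLambdaMinimal s Λ E (Metric.ball x r)) →
          ∀ x : EuclideanSpace ℝ (Fin n),
            (∑' i, fracPerLoc n s (E i) (Metric.ball x r))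
              ≤ C₀ * ENNReal.ofReal (r ^ ((n : ℝ) - s)) := by
  rcases eq_or_ne n 0 with rfl | hn
  · exact ⟨1, one_pos, ENNReal.one_ne_top, fun E _ r _ _ _ x => by
      simp [fracPerLoc_zero_dim hs.1]⟩
  have : Nonempty (Fin n) := ⟨⟨0, Nat.pos_of_ne_zero hn⟩⟩
  set K := sphereMass n * sphereMass n * ENNReal.ofReal (1 / s / (1 - s)) with hK
  set ω := volume (Metric.ball (0 : EuclideanSpace ℝ (Fin n)) 1) with hω
  have hKt : K ≠ ⊤ := ENNReal.mul_ne_top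
    (ENNReal.mul_ne_top (sphereMass_ne_top n) (sphereMass_ne_top n)) ENNReal.ofReal_ne_top
  have hωt : ω ≠ ⊤ := measure_ball_lt_top.ne
  refine ⟨3 * K + Λ * (2 * ω) + 1, by simp, ?_, ?_⟩
  · finiteness
  intro E hE r hr0 hr hmin x
  have hn1 : (1 : ℝ) ≤ n := by exact_mod_cast Nat.one_le_iff_ne_zero.2 hn
  set ν := Measure.sum (fun i => perMeasure n s (Metric.ball x r) (E i)) with hν
  have htot : ∑' i, fracPerLoc n s (E i) (Metric.ball x r) = ν (Metric.ball x r) := by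
    rw [hν, Measure.sum_apply _ measurableSet_ball]
    simp only [fracPerLoc_eq_perMeasure measurableSet_ball]
  have hball : ∀ ρ, 0 < ρ → ρ < r → ν (Metric.ball x ρ)
      ≤ (3 * K + Λ * (2 * ω) + 1) * ENNReal.ofReal (r ^ ((n : ℝ) - s)) := by
    intro ρ hρ hρr
    refine (perMeasure_ball_le hE hρr (hmin x)).trans ?_
    have h1 : fracInter n s (Metric.ball x ρ) (Metric.ball x ρ)ᶜ
        ≤ K * ENNReal.ofReal (r ^ ((n : ℝ) - s)) := by
      refine (fracInter_ball_compl_le hn hs x hρ).trans ?_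
      gcongr
      linarith [hs.2]
    have h2 : volume (Metric.ball x ρ) ≤ ω * ENNReal.ofReal (r ^ ((n : ℝ) - s)) := by
      rw [Measure.addHaar_ball _ _ hρ.le, finrank_euclideanSpace_fin, mul_comm]
      gcongr
      calc ρ ^ n ≤ r ^ n := by gcongr
        _ = r ^ (n : ℝ) := (Real.rpow_natCast _ _).symm
        _ ≤ r ^ ((n : ℝ) - s) :=
          Real.rpow_le_rpow_of_exponent_ge hr0 (by linarith) (by linarith [hs.1])
    calc _ ≤ 3 * (K * ENNReal.ofReal (r ^ ((n : ℝ) - s)))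
          + Λ * (2 * (ω * ENNReal.ofReal (r ^ ((n : ℝ) - s)))) := by gcongr
      _ = (3 * K + Λ * (2 * ω)) * ENNReal.ofReal (r ^ ((n : ℝ) - s)) := by ring
      _ ≤ _ := mul_le_mul_left le_self_add _
  -- Exhaust the open ball by balls of radii `u k ↑ r` and use continuity from below.
  obtain ⟨u, hu, hu_mem, hu_lim⟩ := exists_seq_strictMono_tendsto' hr0
  have hU : Metric.ball x r = ⋃ k, Metric.ball x (u k) := by
    ext y
    simp only [Metric.mem_ball, mem_iUnion]
    constructor
    · intro hy
      exact (hu_lim.eventually (lt_mem_nhds hy)).exists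
    · rintro ⟨k, hk⟩
      exact hk.trans (hu_mem k).2
  have hmono : Monotone fun k => Metric.ball x (u k) := fun i j hij =>
    Metric.ball_subset_ball (hu.monotone hij)
  rw [htot]
  conv_lhs => rw [hU]
  rw [hmono.measure_iUnion]
  exact iSup_le fun k => hball _ (hu_mem k).1 (hu_mem k).2
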